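/- arXiv:1207.0472 — 2 statements merged into one kernel-verified Lean document; each statement's English description precedes it below -/
import Mathlib

section
/- Let g be a Leibniz n-algebra over K. Then the actions ω₀^l and ω₀^r make g a co-representation over the Leibniz algebra (D_n(g), ω₁); that is, for all u,v ∈ D_n(g) and m ∈ g: (i) ω₀^l(ω₁(u,v), m) = ω₀^l(u, ω₀^l(v,m)) − ω₀^l(v, ω₀^l(u,m)); (ii) ω₀^l(v, ω₀^r(m,u)) = ω₀^r(ω₀^l(v,m), u) − ω₀^r(m, ω₁(u,v)); (iii) ω₀^r(ω₀^r(m,u), v) = ω₀^r(m, ω₁(u,v)) − ω₀^r(ω₀^l(v,m), u). -/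
open scoped TensorProduct
open PiTensorProduct

/-!
Since `ω₀ˡ = -ω₀ʳ`, the three axioms are rearrangements of the single identity
`(x · u) · v = (x · v) · u + x · ω₁(u, v)` for the right action `x · u = ω₀ʳ(x, u)`.
Both sides are bilinear in `(u, v)`, and on pure tensors the identity is the fundamental identity
for `[[x, a₁, …, aₘ], b₁, …, bₘ]` with the summand in which `x` is acted on split off.
-/

section Corepresentation

variable {R D M : Type*} [CommSemiring R] [AddCommMonoid D] [Module R D]
  [AddCommGroup M] [Module R M]

/-- The axioms of a co-representation `M` over a right Leibniz algebra `D`, with bracket `ω`, left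
action `l` and right action `r`. The Leibniz identity for `ω` is not part of the structure. -/
structure IsLeibnizCorepresentation (ω : D →ₗ[R] D →ₗ[R] D) (l : D →ₗ[R] M →ₗ[R] M)
    (r : M →ₗ[R] D →ₗ[R] M) : Prop where
  left_bracket : ∀ (u v : D) (x : M), l (ω u v) x = l u (l v x) - l v (l u x)
  left_right : ∀ (u v : D) (x : M), l v (r x u) = r (l v x) u - r x (ω u v)
  right_right : ∀ (u v : D) (x : M), r (r x u) v = r x (ω u v) - r (l v x) u

theorem IsLeibnizCorepresentation.of_right {ω : D →ₗ[R] D →ₗ[R] D} {l : D →ₗ[R] M →ₗ[R] M}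
    {r : M →ₗ[R] D →ₗ[R] M} (left_eq : ∀ u x, l u x = -r x u)
    (right_leibniz : ∀ x u v, r (r x u) v = r (r x v) u + r x (ω u v)) :
    IsLeibnizCorepresentation ω l r where
  left_bracket u v x := by
    simp only [left_eq, map_neg, LinearMap.neg_apply, right_leibniz x u v]
    abel
  left_right u v x := by
    simp only [left_eq, map_neg, LinearMap.neg_apply, right_leibniz x u v]
    abel
  right_right u v x := by
    simp only [left_eq, map_neg, LinearMap.neg_apply, right_leibniz x u v]
    abel

end Corepresentation

theorem bilinear_ext_tprod {ι κ R P : Type*} {s : ι → Type*} {t : κ → Type*} [CommSemiring R]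
    [∀ i, AddCommMonoid (s i)] [∀ i, Module R (s i)]
    [∀ k, AddCommMonoid (t k)] [∀ k, Module R (t k)] [AddCommMonoid P] [Module R P]
    {f f' : (⨂[R] i, s i) →ₗ[R] (⨂[R] k, t k) →ₗ[R] P}
    (h : ∀ a b, f (tprod R a) (tprod R b) = f' (tprod R a) (tprod R b)) : f = f' :=
  PiTensorProduct.ext <| MultilinearMap.ext fun a =>
    PiTensorProduct.ext <| MultilinearMap.ext fun b => h a b

section FundamentalIdentity

variable {R g : Type*} [CommSemiring R] [AddCommMonoid g] [Module R g] {m : ℕ}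

/-- The fundamental identity of a Leibniz `(m + 1)`-algebra: each `[-, y₁, …, yₘ]` is a derivation
of the bracket. The arity is written `m + 1` so that `m` is the tensor power in `Dₙ(g)`. -/
def FundamentalIdentity (br : MultilinearMap R (fun _ : Fin (m + 1) => g) g) : Prop :=
  ∀ (x : Fin (m + 1) → g) (y : Fin m → g),
    br (Fin.cons (br x) y) = ∑ i : Fin (m + 1), br (Function.update x i (br (Fin.cons (x i) y)))

variable {br : MultilinearMap R (fun _ : Fin (m + 1) => g) g}

theorem FundamentalIdentity.bracket_bracket_cons (fund : FundamentalIdentity br) (x : g)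
    (a b : Fin m → g) :
    br (Fin.cons (br (Fin.cons x a)) b) =
      br (Fin.cons (br (Fin.cons x b)) a) +
        ∑ i : Fin m, br (Fin.cons x (Function.update a i (br (Fin.cons (a i) b)))) := by
  rw [fund, Fin.sum_univ_succ]
  simp only [Fin.cons_zero, Fin.cons_succ, Fin.update_cons_zero, Fin.cons_update]

theorem FundamentalIdentity.right_leibniz (fund : FundamentalIdentity br)
    {ω : (⨂[R]^m g) →ₗ[R] (⨂[R]^m g) →ₗ[R] (⨂[R]^m g)}
    (hω : ∀ a b : Fin m → g,
      ω (tprod R a) (tprod R b) =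
        ∑ i : Fin m, tprod R (Function.update a i (br (Fin.cons (a i) b))))
    {r : g →ₗ[R] (⨂[R]^m g) →ₗ[R] g}
    (hr : ∀ (x : g) (a : Fin m → g), r x (tprod R a) = br (Fin.cons x a))
    (x : g) (u v : ⨂[R]^m g) : r (r x u) v = r (r x v) u + r x (ω u v) := by
  have bilinear_eq : r ∘ₗ r x = (r ∘ₗ r x).flip + ω.compr₂ (r x) :=
    bilinear_ext_tprod fun a b => by
      simp only [LinearMap.add_apply, LinearMap.flip_apply, LinearMap.comp_apply,
        LinearMap.compr₂_apply, hω, map_sum, hr]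
      exact fund.bracket_bracket_cons x a b
  exact LinearMap.congr_fun₂ bilinear_eq u v

end FundamentalIdentity

theorem statement0_general {R g : Type*} [CommSemiring R] [AddCommGroup g] [Module R g] {m : ℕ}
    {br : MultilinearMap R (fun _ : Fin (m + 1) => g) g} (fund : FundamentalIdentity br)
    {ω₁ : (⨂[R]^m g) →ₗ[R] (⨂[R]^m g) →ₗ[R] (⨂[R]^m g)}
    (hω₁ : ∀ a b : Fin m → g,
      ω₁ (tprod R a) (tprod R b) =
        ∑ i : Fin m, tprod R (Function.update a i (br (Fin.cons (a i) b))))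
    {ω₀l : (⨂[R]^m g) →ₗ[R] g →ₗ[R] g}
    (hω₀l : ∀ (a : Fin m → g) (x : g), ω₀l (tprod R a) x = -br (Fin.cons x a))
    {ω₀r : g →ₗ[R] (⨂[R]^m g) →ₗ[R] g}
    (hω₀r : ∀ (x : g) (a : Fin m → g), ω₀r x (tprod R a) = br (Fin.cons x a)) :
    IsLeibnizCorepresentation ω₁ ω₀l ω₀r := by
  have left_eq_neg_right : ω₀l = -ω₀r.flip := by
    refine PiTensorProduct.ext (MultilinearMap.ext fun a => LinearMap.ext fun x => ?_)
    exact (hω₀l a x).trans (congrArg Neg.neg (hω₀r x a).symm)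
  exact .of_right (LinearMap.congr_fun₂ left_eq_neg_right) (fund.right_leibniz hω₁ hω₀r)

/-- Let `g` be a Leibniz `n`-algebra over a field `K` of characteristic `≠ 2`
(we write `n = m + 1`, so `n ≥ 2` corresponds to `1 ≤ m`).  The actions `ω₀ˡ` and `ω₀ʳ`,
determined on pure tensors by `ω₀ˡ(a₁⊗…⊗a_{n-1}, x) = -[x,a₁,…,a_{n-1}]` and
`ω₀ʳ(x, a₁⊗…⊗a_{n-1}) = [x,a₁,…,a_{n-1}]`, make `g` a co-representation over the Leibniz
algebra `(Dₙ(g), ω₁)`, where `Dₙ(g) = g^{⊗(n-1)}` and `ω₁` is determined on pure tensors by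
`ω₁(a₁⊗…⊗a_{n-1}, b₁⊗…⊗b_{n-1}) = Σᵢ a₁⊗…⊗[aᵢ,b₁,…,b_{n-1}]⊗…⊗a_{n-1}`. -/
theorem statement0 (K : Type) [Field K] (hchar : ringChar K ≠ 2)
    (g : Type) [AddCommGroup g] [Module K g] (m : ℕ) (hm : 1 ≤ m)
    -- the Leibniz (m+1)-algebra bracket and its fundamental identity
    (br : MultilinearMap K (fun _ : Fin (m+1) => g) g)
    (fund : ∀ (x : Fin (m+1) → g) (y : Fin m → g),
      br (Fin.cons (br x) y)
        = ∑ i : Fin (m+1), br (Function.update x i (br (Fin.cons (x i) y))))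
    -- the Leibniz bracket ω₁ on Dₙ(g) = g^{⊗ m}
    (ω₁ : (⨂[K]^m g) →ₗ[K] (⨂[K]^m g) →ₗ[K] (⨂[K]^m g))
    (hω₁ : ∀ a b : Fin m → g,
      ω₁ (tprod K a) (tprod K b)
        = ∑ i : Fin m, tprod K (Function.update a i (br (Fin.cons (a i) b))))
    -- the left action ω₀ˡ of Dₙ(g) on g
    (ω₀l : (⨂[K]^m g) →ₗ[K] g →ₗ[K] g)
    (hω₀l : ∀ (a : Fin m → g) (x : g), ω₀l (tprod K a) x = - br (Fin.cons x a))
    -- the right action ω₀ʳ of Dₙ(g) on g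
    (ω₀r : g →ₗ[K] (⨂[K]^m g) →ₗ[K] g)
    (hω₀r : ∀ (x : g) (a : Fin m → g), ω₀r x (tprod K a) = br (Fin.cons x a)) :
    -- the three co-representation axioms
    (∀ (u v : ⨂[K]^m g) (x : g),
        ω₀l (ω₁ u v) x = ω₀l u (ω₀l v x) - ω₀l v (ω₀l u x)) ∧
    (∀ (u v : ⨂[K]^m g) (x : g),
        ω₀l v (ω₀r x u) = ω₀r (ω₀l v x) u - ω₀r x (ω₁ u v)) ∧
    (∀ (u v : ⨂[K]^m g) (x : g),
        ω₀r (ω₀r x u) v = ω₀r x (ω₁ u v) - ω₀r (ω₀l v x) u) := by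
  have corep := statement0_general fund hω₁ hω₀l hω₀r
  exact ⟨corep.left_bracket, corep.left_right, corep.right_right⟩
end

section
/- Let g be a Leibniz n-algebra over K. For a tuple x = (x₁,…,x_{n−1}) ∈ g^{n−1}, let λ_x : g^{⊗(n−1)} → g^{⊗(n−1)} be the linear map determined on pure tensors by λ_x(b₁⊗…⊗b_{n−1}) = −Σ_{j=1}^{n−1} b₁⊗…⊗[b_j,x₁,…,x_{n−1}]⊗…⊗b_{n−1}. Then for all tuples x = (x₁,…,x_{n−1}) and y = (y₁,…,y_{n−1}) in g^{n−1}, one has Σ_{i=1}^{n−1} λ_{(x₁,…,x_{i−1},[x_i,y₁,…,y_{n−1}],x_{i+1},…,x_{n−1})} = λ_x ∘ λ_y − λ_y ∘ λ_x as linear endomorphisms of g^{⊗(n−1)}. -/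
open scoped TensorProduct
open PiTensorProduct

/-!
Every right multiplication `R_x = [-, x₁, …, x_{n-1}]` is an endomorphism of `g`, and `λ_x` is minus
its extension `D R_x` to the tensor power by the Leibniz rule. The map `D` preserves commutators:
endomorphisms acting on different tensor factors commute, so only the diagonal terms of
`[D f₁, D f₂]` survive. The fundamental identity, solved for the terms in which `y` acts on `x`,
reads `∑ᵢ R_{(x₁, …, [xᵢ, y₁, …, y_{n-1}], …, x_{n-1})} = [R_y, R_x]`; applying `-D` turns the right
side into `-[D R_y, D R_x] = [λ_x, λ_y]`.
-/

section TensorDerivation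

variable {R ι : Type*} [CommRing R] [DecidableEq ι]
  {s : ι → Type*} [∀ i, AddCommGroup (s i)] [∀ i, Module R (s i)]

theorem lie_map_mulSingle_of_ne {i j : ι} (hij : i ≠ j) (u : Module.End R (s i))
    (v : Module.End R (s j)) :
    ⁅map (Pi.mulSingle i u : ∀ k, Module.End R (s k)),
      map (Pi.mulSingle j v : ∀ k, Module.End R (s k))⁆ = 0 :=
  ((Pi.mulSingle_commute (f := fun k => Module.End R (s k)) hij u v).map mapMonoidHom).lie_eq

theorem lie_map_mulSingle_same (i : ι) (u v : Module.End R (s i)) :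
    ⁅map (Pi.mulSingle i u : ∀ k, Module.End R (s k)),
      map (Pi.mulSingle i v : ∀ k, Module.End R (s k))⁆ = map (Pi.mulSingle i ⁅u, v⁆) := by
  have map_mul_mulSingle (u v : Module.End R (s i)) :
      map (Pi.mulSingle i (u * v) : ∀ k, Module.End R (s k)) =
        map (Pi.mulSingle i u) * map (Pi.mulSingle i v) := by
    rw [Pi.mulSingle_mul]
    exact map_mul mapMonoidHom _ _
  rw [Ring.lie_def, Ring.lie_def, ← map_mul_mulSingle, ← map_mul_mulSingle]
  exact ((mapMultilinear R s s).map_update_sub 1 i (u * v) (v * u)).symm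

variable [Fintype ι]

/-- The extension of a family of endomorphisms to the tensor product by the Leibniz rule, encoded as
the derivative of the multilinear map `PiTensorProduct.map` at the family of identities. -/
noncomputable def tensorDerivation :
    (∀ i, Module.End R (s i)) →ₗ[R] Module.End R (⨂[R] i, s i) :=
  (mapMultilinear R s s).linearDeriv 1

theorem tensorDerivation_apply (f : ∀ i, Module.End R (s i)) :
    tensorDerivation f = ∑ i, map (Pi.mulSingle i (f i)) :=
  (mapMultilinear R s s).linearDeriv_apply 1 f

theorem tensorDerivation_tprod (f : ∀ i, Module.End R (s i)) (b : ∀ i, s i) :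
    tensorDerivation f (tprod R b) = ∑ i, tprod R (Function.update b i (f i (b i))) := by
  simp only [tensorDerivation_apply, LinearMap.sum_apply, map_tprod]
  refine Finset.sum_congr rfl fun i _ => congrArg _ (funext fun k => ?_)
  obtain rfl | hki := eq_or_ne k i
  · simp only [Pi.mulSingle_eq_same, Function.update_self]
  · simp only [Pi.mulSingle_eq_of_ne hki, Function.update_of_ne hki, Module.End.one_apply]

attribute [local instance] LieRing.ofAssociativeRing

theorem tensorDerivation_lie (f₁ f₂ : ∀ i, Module.End R (s i)) :
    tensorDerivation ⁅f₁, f₂⁆ = ⁅tensorDerivation f₁, tensorDerivation f₂⁆ := by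
  simp only [tensorDerivation_apply, sum_lie_sum]
  refine Finset.sum_congr rfl fun i _ => ?_
  rw [Finset.sum_eq_single_of_mem i (Finset.mem_univ i)
    fun j _ hji => lie_map_mulSingle_of_ne hji.symm (f₁ i) (f₂ j)]
  exact (lie_map_mulSingle_same i (f₁ i) (f₂ i)).symm

end TensorDerivation

section LeibnizBracket

variable {R g : Type*} [CommRing R] [AddCommGroup g] [Module R g] {m : ℕ}

/-- A Leibniz `(m + 1)`-algebra structure: the fundamental identity, which says that bracketing
with `y₁, …, yₘ` on the right is a derivation of the bracket. -/
def IsLeibnizBracket (br : MultilinearMap R (fun _ : Fin (m + 1) => g) g) : Prop :=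
  ∀ (x : Fin (m + 1) → g) (y : Fin m → g),
    br (Fin.cons (br x) y) = ∑ i, br (Function.update x i (br (Fin.cons (x i) y)))

/-- The right multiplication `[-, x₁, …, xₘ]` as an endomorphism. -/
def rightMul (br : MultilinearMap R (fun _ : Fin (m + 1) => g) g) (x : Fin m → g) :
    Module.End R g where
  toFun a := br (Fin.cons a x)
  map_add' := br.cons_add x
  map_smul' := br.cons_smul x

theorem rightMul_apply (br : MultilinearMap R (fun _ : Fin (m + 1) => g) g) (x : Fin m → g)
    (a : g) : rightMul br x a = br (Fin.cons a x) :=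
  rfl

theorem IsLeibnizBracket.sum_rightMul_update
    {br : MultilinearMap R (fun _ : Fin (m + 1) => g) g} (hbr : IsLeibnizBracket br)
    (x y : Fin m → g) :
    ∑ i, rightMul br (Function.update x i (rightMul br y (x i))) =
      ⁅rightMul br y, rightMul br x⁆ := by
  ext a
  have fundamental : rightMul br y (rightMul br x a) = rightMul br x (rightMul br y a) +
      ∑ i, rightMul br (Function.update x i (rightMul br y (x i))) a := by
    simpa only [rightMul_apply, Fin.sum_univ_succ, Fin.cons_zero, Fin.cons_succ,
      Fin.update_cons_zero, ← Fin.cons_update] using hbr (Fin.cons a x) y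
  simp only [LinearMap.sum_apply, Ring.lie_def, LinearMap.sub_apply, Module.End.mul_apply]
  exact eq_sub_of_add_eq' fundamental.symm

theorem statement3_general {ι : Type*} [Fintype ι] [DecidableEq ι]
    (br : MultilinearMap R (fun _ : Fin (m + 1) => g) g) (hbr : IsLeibnizBracket br)
    (lam : (Fin m → g) → Module.End R (⨂[R] _ : ι, g))
    (hlam : ∀ (x : Fin m → g) (b : ι → g),
      lam x (tprod R b) = -∑ j, tprod R (Function.update b j (br (Fin.cons (b j) x))))
    (x y : Fin m → g) :
    ∑ i, lam (Function.update x i (br (Fin.cons (x i) y))) = lam x ∘ₗ lam y - lam y ∘ₗ lam x := by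
  have lam_eq (z : Fin m → g) : lam z = -tensorDerivation fun _ : ι => rightMul br z := by
    ext b
    simpa only [LinearMap.compMultilinearMap_apply, LinearMap.neg_apply, tensorDerivation_tprod,
      rightMul_apply] using hlam z b
  calc
    ∑ i, lam (Function.update x i (br (Fin.cons (x i) y)))
    _ = -tensorDerivation
          (∑ i, fun _ : ι => rightMul br (Function.update x i (rightMul br y (x i)))) := by
      simp only [lam_eq, Finset.sum_neg_distrib, map_sum, rightMul_apply]
    _ = -tensorDerivation ⁅fun _ : ι => rightMul br y, fun _ : ι => rightMul br x⁆ := by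
      congr 2
      ext1 k
      rw [Finset.sum_apply, hbr.sum_rightMul_update, LieRing.lie_apply]
    _ = lam x ∘ₗ lam y - lam y ∘ₗ lam x := by
      rw [tensorDerivation_lie, Ring.lie_def, neg_sub, lam_eq x, lam_eq y]
      simp only [LinearMap.neg_comp, LinearMap.comp_neg, neg_neg, Module.End.mul_eq_comp]

end LeibnizBracket

/-- Let `g` be a Leibniz `n`-algebra over a field `K` of characteristic `≠ 2`
(write `n = m + 1`, `n ≥ 2`).  For a tuple `x ∈ g^{n-1}` let `λ_x : g^{⊗(n-1)} → g^{⊗(n-1)}`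
be the linear map determined on pure tensors by
`λ_x(b₁⊗…⊗b_{n-1}) = -Σⱼ b₁⊗…⊗[bⱼ,x₁,…,x_{n-1}]⊗…⊗b_{n-1}`.  Then for all tuples `x, y`,
`Σᵢ λ_{(x₁,…,[xᵢ,y₁,…,y_{n-1}],…,x_{n-1})} = λ_x ∘ λ_y - λ_y ∘ λ_x`. -/
theorem statement3 (K : Type) [Field K] (hchar : ringChar K ≠ 2)
    (g : Type) [AddCommGroup g] [Module K g] (m : ℕ) (hm : 1 ≤ m)
    (br : MultilinearMap K (fun _ : Fin (m+1) => g) g)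
    (fund : ∀ (x : Fin (m+1) → g) (y : Fin m → g),
      br (Fin.cons (br x) y)
        = ∑ i : Fin (m+1), br (Function.update x i (br (Fin.cons (x i) y))))
    (lam : (Fin m → g) → ((⨂[K]^m g) →ₗ[K] (⨂[K]^m g)))
    (hlam : ∀ (x : Fin m → g) (b : Fin m → g),
      lam x (tprod K b)
        = - ∑ j : Fin m, tprod K (Function.update b j (br (Fin.cons (b j) x)))) :
    ∀ x y : Fin m → g,
      ∑ i : Fin m, lam (Function.update x i (br (Fin.cons (x i) y)))
        = lam x ∘ₗ lam y - lam y ∘ₗ lam x :=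
  statement3_general br fund lam hlam
end
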